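/- Suppose f ∈ 𝓑₊. Then its least concave majorant f̄ belongs to 𝓑₊ and satisfies A_{0,1}(f̄) = A_{0,1}(f) and Γ_{0,1}(f̄) ≤ Γ_{0,1}(f). -/

import Mathlib

/-!
Let `F` be the least concave majorant of the nonnegative bridge `f`.

*Area.* `F` is its own least concave majorant, and a nonnegative function vanishing at `0` and `1`
has greatest convex minorant `0` (`convMin_eq_zero`), so the two area integrands agree on `[0, 1]`.

*Continuity.* Cauchy–Schwarz gives `f t ≤ √(Γ t)` and `f t ≤ √(Γ (1 - t))`. Both bounds are concave
in `t`, so they hold for `F` as well (`concMaj_le_sqrt`); hence `F` vanishes at `0` and `1` and is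
continuous there. In the interior, continuity follows from concavity.

*Energy.* The open set `{f < F}` is a countable disjoint union of intervals `(a, b)` with contact
endpoints. On each of them `F` is the chord of `f` (`concMaj_eq_chord`), and the chord has at
most the energy of `f` on `(a, b)` (`MemA.chord_energy_le`). At a contact point where `f` is
differentiable, `F` has the same derivative (`hasDerivAt_of_contact`). Summing up gives
`∫ F'² ≤ ∫ f'²` (`lintegral_deriv_concMaj_le`), an inequality in `[0, ∞]`, so `F'` is square
integrable.

*Absolute continuity.* As `F'` is integrable and `F` is continuous with right derivatives
everywhere inside, `F` is the integral of `F'` (`concave_eq_integral_deriv`).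
-/

open MeasureTheory Filter Set
open scoped ENNReal

noncomputable section

namespace DidoLIL

/-- `f ∈ 𝓐^x`: `f : [0,x] → ℝ` is absolutely continuous with `f 0 = 0` and
`∫₀ˣ f′(u)² du < ∞`.  Absolute continuity is encoded by the fundamental theorem of
calculus: `f` is the integral of its (a.e.) derivative, which is integrable, and the
square of the derivative is integrable (`Γ_{0,x}(f) < ∞`). -/
def MemA (x : ℝ) (f : ℝ → ℝ) : Prop :=
  f 0 = 0 ∧
  MeasureTheory.IntegrableOn (deriv f) (Set.Icc 0 x) ∧
  (∀ t ∈ Set.Icc (0:ℝ) x, f t = ∫ s in (0:ℝ)..t, deriv f s) ∧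
  MeasureTheory.IntegrableOn (fun u => (deriv f u) ^ 2) (Set.Icc 0 x)

/-- The least concave majorant of `f` on `[0,x]`: the pointwise infimum of all functions
concave on `[0,x]` that dominate `f` there. -/
def concMaj (x : ℝ) (f : ℝ → ℝ) (u : ℝ) : ℝ :=
  sInf {y : ℝ | ∃ g : ℝ → ℝ, ConcaveOn ℝ (Set.Icc 0 x) g ∧
    (∀ t ∈ Set.Icc (0:ℝ) x, f t ≤ g t) ∧ y = g u}

/-- The greatest convex minorant of `f` on `[0,x]`: the pointwise supremum of all functions
convex on `[0,x]` that are dominated by `f` there. -/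
def convMin (x : ℝ) (f : ℝ → ℝ) (u : ℝ) : ℝ :=
  sSup {y : ℝ | ∃ g : ℝ → ℝ, ConvexOn ℝ (Set.Icc 0 x) g ∧
    (∀ t ∈ Set.Icc (0:ℝ) x, g t ≤ f t) ∧ y = g u}

/-- `A_{0,x}(f) = ∫₀ˣ (f̄(u) − f̲(u)) du`. -/
def AreaF (x : ℝ) (f : ℝ → ℝ) : ℝ :=
  ∫ u in Set.Icc (0:ℝ) x, (concMaj x f u - convMin x f u)

/-- `Γ_{0,x}(f) = ∫₀ˣ f′(u)² du`. -/
def GammaF (x : ℝ) (f : ℝ → ℝ) : ℝ :=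
  ∫ u in Set.Icc (0:ℝ) x, (deriv f u) ^ 2

end DidoLIL


namespace DidoLIL

/-! ### Elementary properties of the least concave majorant -/

section Majorant

variable {f g : ℝ → ℝ} {M u : ℝ}

lemma concMaj_le (hg : ConcaveOn ℝ (Icc 0 1) g) (hfg : ∀ t ∈ Icc (0 : ℝ) 1, f t ≤ g t)
    (hu : u ∈ Icc (0 : ℝ) 1) : concMaj 1 f u ≤ g u := by
  refine csInf_le ⟨f u, ?_⟩ ⟨g, hg, hfg, rfl⟩
  rintro y ⟨h, -, hfh, rfl⟩
  exact hfh u hu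

lemma le_concMaj_of_forall (hM : ∀ t ∈ Icc (0 : ℝ) 1, f t ≤ M) {c : ℝ}
    (hc : ∀ g : ℝ → ℝ, ConcaveOn ℝ (Icc 0 1) g → (∀ t ∈ Icc (0 : ℝ) 1, f t ≤ g t) → c ≤ g u) :
    c ≤ concMaj 1 f u := by
  refine le_csInf ⟨M, fun _ => M, concaveOn_const M (convex_Icc 0 1), hM, rfl⟩ ?_
  rintro y ⟨g, hg, hfg, rfl⟩
  exact hc g hg hfg

lemma le_concMaj (hM : ∀ t ∈ Icc (0 : ℝ) 1, f t ≤ M) (hu : u ∈ Icc (0 : ℝ) 1) :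
    f u ≤ concMaj 1 f u :=
  le_concMaj_of_forall hM fun _ _ hfg => hfg u hu

lemma concaveOn_concMaj (hM : ∀ t ∈ Icc (0 : ℝ) 1, f t ≤ M) :
    ConcaveOn ℝ (Icc 0 1) (concMaj 1 f) := by
  refine ⟨convex_Icc 0 1, fun x hx y hy a b ha hb hab => ?_⟩
  refine le_concMaj_of_forall hM fun g hg hfg => le_trans ?_ (hg.2 hx hy ha hb hab)
  have h1 := concMaj_le hg hfg hx
  have h2 := concMaj_le hg hfg hy
  simp only [smul_eq_mul]
  gcongr

lemma concMaj_eq_self (hf : ConcaveOn ℝ (Icc 0 1) f) (hM : ∀ t ∈ Icc (0 : ℝ) 1, f t ≤ M)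
    (hu : u ∈ Icc (0 : ℝ) 1) : concMaj 1 f u = f u :=
  le_antisymm (concMaj_le hf (fun _ _ => le_rfl) hu) (le_concMaj hM hu)

/-- A nonnegative function vanishing at both ends has greatest convex minorant `0`, because a
convex minorant is nonpositive at the ends and hence everywhere. -/
lemma convMin_eq_zero (h0 : f 0 = 0) (h1 : f 1 = 0) (hn : ∀ t ∈ Icc (0 : ℝ) 1, 0 ≤ f t)
    (hu : u ∈ Icc (0 : ℝ) 1) : convMin 1 f u = 0 := by
  have key : ∀ y ∈ {y : ℝ | ∃ g : ℝ → ℝ, ConvexOn ℝ (Set.Icc 0 1) g ∧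
      (∀ t ∈ Set.Icc (0:ℝ) 1, g t ≤ f t) ∧ y = g u}, y ≤ 0 := by
    rintro y ⟨g, hg, hgf, rfl⟩
    have hz : (0 : ℝ) ∈ Icc (0 : ℝ) 1 := by simp
    have ho : (1 : ℝ) ∈ Icc (0 : ℝ) 1 := by simp
    have h := hg.2 hz ho (sub_nonneg.2 hu.2) hu.1 (by ring)
    have e0 := hgf 0 hz
    have e1 := hgf 1 ho
    simp only [smul_eq_mul, mul_zero, mul_one, zero_add] at h
    rw [h0] at e0
    rw [h1] at e1
    have p1 := mul_nonneg (sub_nonneg.2 hu.2) (neg_nonneg.2 e0)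
    have p2 := mul_nonneg hu.1 (neg_nonneg.2 e1)
    linarith
  refine le_antisymm (csSup_le ⟨0, fun _ => 0, convexOn_const 0 (convex_Icc 0 1), hn, rfl⟩ key) ?_
  exact le_csSup ⟨0, key⟩ ⟨fun _ => 0, convexOn_const 0 (convex_Icc 0 1), hn, rfl⟩

end Majorant

/-- A concave function stays below a chord line outside the chord. -/
lemma concave_le_chord_outside {F : ℝ → ℝ} (hF : ConcaveOn ℝ (Icc 0 1) F) {a b : ℝ}
    (ha : a ∈ Icc (0 : ℝ) 1) (hb : b ∈ Icc (0 : ℝ) 1) (hab : a < b) {t : ℝ}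
    (ht : t ∈ Icc (0 : ℝ) 1) (hout : t ∉ Icc a b) :
    F t ≤ F a + (F b - F a) / (b - a) * (t - a) := by
  have hba : 0 < b - a := sub_pos.2 hab
  rcases lt_or_ge t a with hta | hta
  · have h := hF.slope_anti_adjacent ht hb hta hab
    rw [le_div_iff₀ (sub_pos.2 hta)] at h
    linarith
  · have htb : b < t := by
      by_contra! h
      exact hout ⟨hta, h⟩
    have h := hF.slope_anti_adjacent ha ht hab htb
    rw [div_le_iff₀ (sub_pos.2 htb)] at h
    have e : (F b - F a) / (b - a) * (b - a) = F b - F a := div_mul_cancel₀ _ hba.ne'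
    nlinarith

lemma chord_le_concave {F : ℝ → ℝ} (hF : ConcaveOn ℝ (Icc 0 1) F) {a b : ℝ}
    (ha : a ∈ Icc (0 : ℝ) 1) (hb : b ∈ Icc (0 : ℝ) 1) (hab : a < b) {t : ℝ}
    (ht : t ∈ Icc a b) :
    F a + (F b - F a) / (b - a) * (t - a) ≤ F t := by
  have hba : 0 < b - a := sub_pos.2 hab
  have h := hF.2 ha hb
    (show 0 ≤ (b - t) / (b - a) from div_nonneg (sub_nonneg.2 ht.2) hba.le)
    (show 0 ≤ (t - a) / (b - a) from div_nonneg (sub_nonneg.2 ht.1) hba.le)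
    (by field_simp; ring)
  simp only [smul_eq_mul] at h
  have e : (b - t) / (b - a) * a + (t - a) / (b - a) * b = t := by field_simp; ring
  rw [e] at h
  refine le_trans (le_of_eq ?_) h
  field_simp
  ring

/-- Between two contact points `a < b` with no contact in between, the least concave majorant is
the chord. Let `m` be the maximum of `f - L` on `[a, b]`, `L` being the chord line. If `m > 0`,
then `min F (L + m)` is a concave majorant touching `f` at the maximizer, which is not a contact
point; hence `m ≤ 0`, and `min F L` is a concave majorant. -/
lemma concMaj_eq_chord {f : ℝ → ℝ} {M : ℝ} (hM : ∀ t ∈ Icc (0 : ℝ) 1, f t ≤ M)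
    (hc : ContinuousOn f (Icc 0 1)) {a b : ℝ}
    (ha : a ∈ Icc (0 : ℝ) 1) (hb : b ∈ Icc (0 : ℝ) 1) (hab : a < b)
    (hfa : f a = concMaj 1 f a) (hfb : f b = concMaj 1 f b)
    (hlt : ∀ t ∈ Ioo a b, f t < concMaj 1 f t) {t : ℝ} (ht : t ∈ Icc a b) :
    concMaj 1 f t = f a + (f b - f a) / (b - a) * (t - a) := by
  set s := (f b - f a) / (b - a) with hs
  have hba : 0 < b - a := sub_pos.2 hab
  have hsub : Icc a b ⊆ Icc (0 : ℝ) 1 := Icc_subset_Icc ha.1 hb.2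
  have hF := concaveOn_concMaj hM
  have hlow : f a + s * (t - a) ≤ concMaj 1 f t := by
    have := chord_le_concave hF ha hb hab ht
    rwa [← hfa, ← hfb] at this
  have hL : ∀ m : ℝ, ConcaveOn ℝ (Icc (0 : ℝ) 1) (fun t => f a + s * (t - a) + m) := by
    intro m
    refine ⟨convex_Icc 0 1, fun x _ y _ p q _ _ hpq => le_of_eq ?_⟩
    simp only [smul_eq_mul]
    obtain rfl : q = 1 - p := by linarith
    ring
  have hup : ∀ m : ℝ, 0 ≤ m → (∀ x ∈ Icc a b, f x ≤ f a + s * (x - a) + m) →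
      ∀ x ∈ Icc a b, concMaj 1 f x ≤ f a + s * (x - a) + m := by
    intro m hm hfm x hx
    refine (concMaj_le (hF.inf (hL m)) (fun y hy => ?_) (hsub hx)).trans inf_le_right
    refine le_inf (le_concMaj hM hy) ?_
    by_cases hy' : y ∈ Icc a b
    · exact hfm y hy'
    · have := concave_le_chord_outside hF ha hb hab hy hy'
      rw [← hfa, ← hfb] at this
      have := le_concMaj hM hy
      linarith
  obtain ⟨y, hy, hmax⟩ := isCompact_Icc.exists_isMaxOn (nonempty_Icc.2 hab.le)
    (f := fun x => f x - (f a + s * (x - a)))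
    ((hc.mono hsub).sub (by fun_prop))
  have hmax' : ∀ x ∈ Icc a b, f x - (f a + s * (x - a)) ≤ f y - (f a + s * (y - a)) :=
    fun x hx => hmax hx
  have hm0 : f y - (f a + s * (y - a)) ≤ 0 := by
    by_contra! hpos
    have h1 := hup _ hpos.le (fun x hx => by linarith [hmax' x hx]) y hy
    have hsb : s * (b - a) = f b - f a := div_mul_cancel₀ _ hba.ne'
    have hya : a ≠ y := by
      rintro rfl
      simp at hpos
    have hyb : y ≠ b := by
      rintro rfl
      linarith
    have := hlt y ⟨lt_of_le_of_ne hy.1 hya, lt_of_le_of_ne hy.2 hyb⟩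
    linarith
  have h2 := hup 0 le_rfl (fun x hx => by linarith [hmax' x hx]) t ht
  linarith

/-! ### Differentiability at contact points -/

/-- If `f ≤ F` with `F` concave and equality at the interior point `x`, then `F` inherits the
derivative of `f` at `x`: the one-sided derivatives of `F` satisfy `F'₊ ≥ f' ≥ F'₋ ≥ F'₊`. -/
lemma hasDerivAt_of_contact {f F : ℝ → ℝ} (hF : ConcaveOn ℝ (Icc 0 1) F)
    (hfF : ∀ t ∈ Icc (0 : ℝ) 1, f t ≤ F t) {x d : ℝ} (hx : x ∈ Ioo (0 : ℝ) 1)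
    (hxe : f x = F x) (hd : HasDerivAt f d x) : HasDerivAt F d x := by
  have hxi : x ∈ interior (Icc (0 : ℝ) 1) := by rwa [interior_Icc]
  have hG := hF.neg
  have hr := (hG.hasDerivWithinAt_rightDeriv_of_mem_interior hxi).neg
  have hl := (hG.hasDerivWithinAt_leftDeriv_of_mem_interior hxi).neg
  have hle := hG.leftDeriv_le_rightDeriv_of_mem_interior hxi
  rw [neg_neg] at hr hl
  set r := -derivWithin (-F) (Ioi x) x with hrdef
  set l := -derivWithin (-F) (Iio x) x with hldef
  rw [hasDerivWithinAt_iff_tendsto_slope' (by simp)] at hr hl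
  have hd' := hasDerivAt_iff_tendsto_slope_left_right.1 hd
  have hI : ∀ᶠ y in nhds x, y ∈ Ioo (0 : ℝ) 1 := Ioo_mem_nhds hx.1 hx.2
  have h1 : d ≤ r := by
    refine le_of_tendsto_of_tendsto hd'.2 hr ?_
    filter_upwards [self_mem_nhdsWithin, nhdsWithin_le_nhds hI] with y hy hy'
    have hy : x < y := hy
    rw [slope_def_field, slope_def_field, hxe]
    have := hfF y (Ioo_subset_Icc_self hy')
    have : 0 ≤ y - x := by linarith
    gcongr
  have h2 : l ≤ d := by
    refine le_of_tendsto_of_tendsto hl hd'.1 ?_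
    filter_upwards [self_mem_nhdsWithin, nhdsWithin_le_nhds hI] with y hy hy'
    have hy : y < x := hy
    rw [slope_def_field, slope_def_field, hxe]
    have := hfF y (Ioo_subset_Icc_self hy')
    exact div_le_div_of_nonpos_of_le (by linarith) (by linarith)
  have e1 : r = d := by linarith
  have e2 : l = d := by linarith
  rw [e1] at hr
  rw [e2] at hl
  exact hasDerivAt_iff_tendsto_slope_left_right.2 ⟨hl, hr⟩

/-! ### Components of open subsets of the line -/

lemma component_eq_Ioo {U : Set ℝ} (hU : IsOpen U) (hsub : U ⊆ Ioo 0 1) {x : ℝ} (hx : x ∈ U) :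
    ∃ a b : ℝ, a < b ∧ a ∈ Icc (0 : ℝ) 1 ∧ b ∈ Icc (0 : ℝ) 1 ∧ a ∉ U ∧ b ∉ U ∧
      connectedComponentIn U x = Ioo a b := by
  set C := connectedComponentIn U x with hC
  have hCU : C ⊆ U := connectedComponentIn_subset U x
  have hxC : x ∈ C := mem_connectedComponentIn hx
  have hCo : IsOpen C := hU.connectedComponentIn
  have hCc : IsConnected C := isConnected_connectedComponentIn_iff.2 hx
  have hbb : BddBelow C := ⟨0, fun y hy => (hsub (hCU hy)).1.le⟩
  have hba : BddAbove C := ⟨1, fun y hy => (hsub (hCU hy)).2.le⟩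
  have hne : C.Nonempty := ⟨x, hxC⟩
  have hIoo := hCc.Ioo_csInf_csSup_subset hbb hba
  have hIcc := subset_Icc_csInf_csSup hbb hba
  set a := sInf C with had
  set b := sSup C with hbd
  have ha : a ∉ C := by
    intro h
    obtain ⟨l, u, hl, hlC⟩ := (mem_nhds_iff_exists_Ioo_subset.1 (hCo.mem_nhds h))
    obtain ⟨y, hy1, hy2⟩ := exists_between hl.1
    exact absurd (hIcc (hlC ⟨hy1, hy2.trans hl.2⟩)).1 (not_le.2 hy2)
  have hb : b ∉ C := by
    intro h
    obtain ⟨l, u, hl, hlC⟩ := (mem_nhds_iff_exists_Ioo_subset.1 (hCo.mem_nhds h))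
    obtain ⟨y, hy1, hy2⟩ := exists_between hl.2
    exact absurd (hIcc (hlC ⟨hl.1.trans hy1, hy2⟩)).2 (not_le.2 hy1)
  have hCe : C = Ioo a b := by
    refine Subset.antisymm (fun y hy => ⟨?_, ?_⟩) hIoo
    · exact lt_of_le_of_ne (hIcc hy).1 (by rintro h; exact ha (h ▸ hy))
    · exact lt_of_le_of_ne (hIcc hy).2 (by rintro h; exact hb (h ▸ hy))
  have hxab : x ∈ Ioo a b := hCe ▸ hxC
  have hIooU : Ioo a b ⊆ U := hCe ▸ hCU
  refine ⟨a, b, hxab.1.trans hxab.2, ⟨?_, ?_⟩, ⟨?_, ?_⟩, fun h => ha ?_, fun h => hb ?_, hCe⟩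
  · exact le_csInf hne fun y hy => (hsub (hCU hy)).1.le
  · exact hxab.1.le.trans (hsub hx).2.le
  · exact (hsub hx).1.le.trans hxab.2.le
  · exact csSup_le hne fun y hy => (hsub (hCU hy)).2.le
  · refine (isPreconnected_Ico (a := a) (b := b)).subset_connectedComponentIn
      ⟨hxab.1.le, hxab.2⟩ (fun y hy => ?_) ⟨le_rfl, hxab.1.trans hxab.2⟩
    rcases eq_or_lt_of_le hy.1 with h' | h'
    · exact h' ▸ h
    · exact hIooU ⟨h', hy.2⟩
  · refine (isPreconnected_Ioc (a := a) (b := b)).subset_connectedComponentIn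
      ⟨hxab.1, hxab.2.le⟩ (fun y hy => ?_) ⟨hxab.1.trans hxab.2, le_rfl⟩
    rcases eq_or_lt_of_le hy.2 with h' | h'
    · exact h' ▸ h
    · exact hIooU ⟨hy.1, h'⟩

/-- An inequality between integrals over every component of an open set can be summed. -/
lemma lintegral_le_of_components {U : Set ℝ} (hU : IsOpen U) {p q : ℝ → ℝ≥0∞}
    (h : ∀ x ∈ U, ∫⁻ t in connectedComponentIn U x, p t ≤ ∫⁻ t in connectedComponentIn U x, q t) :
    ∫⁻ t in U, p t ≤ ∫⁻ t in U, q t := by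
  set S : Set (Set ℝ) := Set.image (fun x => connectedComponentIn U x) U with hS
  have hdisj : S.PairwiseDisjoint id := by
    rintro _ ⟨x, hx, rfl⟩ _ ⟨y, hy, rfl⟩ hne
    refine Set.disjoint_left.2 fun z hz1 hz2 => hne ?_
    exact (connectedComponentIn_eq hz1).trans (connectedComponentIn_eq hz2).symm
  have hopen : ∀ s ∈ S, IsOpen (id s) := by
    rintro _ ⟨x, hx, rfl⟩
    exact hU.connectedComponentIn
  have hcount : S.Countable := hdisj.countable_of_isOpen hopen (by
    rintro _ ⟨x, hx, rfl⟩
    exact ⟨x, mem_connectedComponentIn hx⟩)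
  have hUe : U = ⋃ s ∈ S, id s := by
    ext y
    simp only [hS, id, mem_iUnion, mem_image, exists_prop]
    refine ⟨fun hy => ⟨_, ⟨y, hy, rfl⟩, mem_connectedComponentIn hy⟩, ?_⟩
    rintro ⟨_, ⟨x, hx, rfl⟩, hy⟩
    exact connectedComponentIn_subset U x hy
  rw [hUe, lintegral_biUnion hcount (fun s hs => (hopen s hs).measurableSet) hdisj,
    lintegral_biUnion hcount (fun s hs => (hopen s hs).measurableSet) hdisj]
  refine ENNReal.tsum_le_tsum ?_
  rintro ⟨_, x, hx, rfl⟩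
  exact h x hx

/-! ### Energy estimates for functions in `𝓐¹` -/

lemma intervalIntegrable_of_Icc {g : ℝ → ℝ} (hg : IntegrableOn g (Icc 0 1)) {a b : ℝ}
    (ha : a ∈ Icc (0 : ℝ) 1) (hb : b ∈ Icc (0 : ℝ) 1) : IntervalIntegrable g volume a b := by
  refine (hg.mono_set ?_).intervalIntegrable
  exact uIcc_subset_Icc ha hb

lemma MemA.continuousOn {f : ℝ → ℝ} (hf : MemA 1 f) : ContinuousOn f (Icc 0 1) := by
  have h := intervalIntegral.continuousOn_primitive_interval (μ := volume)
    (f := deriv f) (a := 0) (b := 1) (by rw [uIcc_of_le zero_le_one]; exact hf.2.1)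
  rw [uIcc_of_le zero_le_one] at h
  exact h.congr hf.2.2.1

lemma MemA.integral_eq_sub {f : ℝ → ℝ} (hf : MemA 1 f) {a b : ℝ}
    (ha : a ∈ Icc (0 : ℝ) 1) (hb : b ∈ Icc (0 : ℝ) 1) :
    ∫ t in a..b, deriv f t = f b - f a := by
  have h0 : (0 : ℝ) ∈ Icc (0 : ℝ) 1 := by simp
  rw [hf.2.2.1 b hb, hf.2.2.1 a ha]
  exact (intervalIntegral.integral_interval_sub_left
    (intervalIntegrable_of_Icc hf.2.1 h0 hb) (intervalIntegrable_of_Icc hf.2.1 h0 ha)).symm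

/-- The chord has the least energy; this comes from `0 ≤ ∫ (f' - s)²` with `s` the slope. -/
lemma MemA.chord_energy_le {f : ℝ → ℝ} (hf : MemA 1 f) {a b : ℝ}
    (ha : a ∈ Icc (0 : ℝ) 1) (hb : b ∈ Icc (0 : ℝ) 1) (hab : a < b) :
    ((f b - f a) / (b - a)) ^ 2 * (b - a) ≤ ∫ t in a..b, (deriv f t) ^ 2 := by
  set s := (f b - f a) / (b - a) with hs
  have hsb : s * (b - a) = f b - f a := div_mul_cancel₀ _ (sub_pos.2 hab).ne'
  have i1 := intervalIntegrable_of_Icc hf.2.1 ha hb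
  have i2 := intervalIntegrable_of_Icc hf.2.2.2 ha hb
  have h0 : 0 ≤ ∫ t in a..b, (deriv f t - s) ^ 2 :=
    intervalIntegral.integral_nonneg hab.le fun _ _ => sq_nonneg _
  have e : ∫ t in a..b, (deriv f t - s) ^ 2
      = (∫ t in a..b, (deriv f t) ^ 2) - 2 * s * (∫ t in a..b, deriv f t) + s ^ 2 * (b - a) := by
    have : ∀ t, (deriv f t - s) ^ 2 = (deriv f t) ^ 2 - 2 * s * deriv f t + s ^ 2 := by
      intro t; ring
    simp_rw [this]
    rw [intervalIntegral.integral_add (i2.sub (i1.const_mul _)) (by simp),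
      intervalIntegral.integral_sub i2 (i1.const_mul _), intervalIntegral.integral_const_mul,
      intervalIntegral.integral_const, smul_eq_mul]
    ring
  rw [e, hf.integral_eq_sub ha hb, ← hsb] at h0
  nlinarith

lemma MemA.sq_sub_le {f : ℝ → ℝ} (hf : MemA 1 f) {a b : ℝ}
    (ha : a ∈ Icc (0 : ℝ) 1) (hb : b ∈ Icc (0 : ℝ) 1) (hab : a ≤ b) :
    (f b - f a) ^ 2 ≤ GammaF 1 f * (b - a) := by
  rcases hab.eq_or_lt with rfl | hab
  · simp
  have hba : 0 < b - a := sub_pos.2 hab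
  have h1 := hf.chord_energy_le ha hb hab
  have h2 : ∫ t in a..b, (deriv f t) ^ 2 ≤ GammaF 1 f := by
    rw [intervalIntegral.integral_of_le hab.le]
    refine setIntegral_mono_set hf.2.2.2 (ae_of_all _ fun _ => sq_nonneg _) ?_
    exact (Ioc_subset_Icc_self.trans (Icc_subset_Icc ha.1 hb.2)).eventuallyLE
  have h3 : ((f b - f a) / (b - a)) ^ 2 * (b - a) * (b - a) = (f b - f a) ^ 2 := by
    field_simp
  rw [← h3]
  exact mul_le_mul_of_nonneg_right (h1.trans h2) hba.le

lemma MemA.ae_hasDerivAt {f : ℝ → ℝ} (hf : MemA 1 f) :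
    ∀ᵐ x, x ∈ Ioo (0 : ℝ) 1 → HasDerivAt f (deriv f x) x := by
  have h := (intervalIntegrable_of_Icc hf.2.1 (a := 0) (b := 1)
    (by simp) (by simp)).ae_hasDerivAt_integral
  rw [uIcc_of_le zero_le_one] at h
  filter_upwards [h] with x hx hx'
  refine (hx (Ioo_subset_Icc_self hx') 0 (by simp)).congr_of_eventuallyEq ?_
  filter_upwards [Ioo_mem_nhds hx'.1 hx'.2] with y hy
  exact hf.2.2.1 y (Ioo_subset_Icc_self hy)

/-! ### The least concave majorant of a nonnegative bridge -/

section Bridge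

variable {f : ℝ → ℝ}

/-- By Cauchy–Schwarz `f` lies below `√(Γ t)` and `√(Γ (1 - t))`; both are concave, so they also
dominate the least concave majorant. -/
lemma concMaj_le_sqrt (hf : MemA 1 f) (h1 : f 1 = 0) {t : ℝ} (ht : t ∈ Icc (0 : ℝ) 1) :
    concMaj 1 f t ≤ √(GammaF 1 f * t) ∧ concMaj 1 f t ≤ √(GammaF 1 f * (1 - t)) := by
  have hΓ : 0 ≤ GammaF 1 f := integral_nonneg fun _ => sq_nonneg _
  have hsq : ConcaveOn ℝ (Ici 0) (fun x : ℝ => √x) := Real.strictConcaveOn_sqrt.concaveOn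
  have hconc : ∀ α β : ℝ, (∀ t ∈ Icc (0 : ℝ) 1, 0 ≤ α * t + β) →
      ConcaveOn ℝ (Icc (0 : ℝ) 1) (fun t => √(α * t + β)) := by
    intro α β h
    refine ⟨convex_Icc 0 1, fun x hx y hy p q hp hq hpq => ?_⟩
    have := hsq.2 (h x hx) (h y hy) hp hq hpq
    refine this.trans (le_of_eq (congrArg _ ?_))
    simp only [smul_eq_mul]
    linear_combination β * hpq
  constructor
  · have := concMaj_le (hconc (GammaF 1 f) 0 fun t ht => by
      rw [add_zero]; exact mul_nonneg hΓ ht.1) (f := f) (fun x hx => ?_) ht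
    · simpa using this
    · refine Real.le_sqrt_of_sq_le ?_
      have := hf.sq_sub_le (a := 0) (b := x) (by simp) hx hx.1
      rw [hf.1] at this
      simpa using this
  · have := concMaj_le (hconc (-GammaF 1 f) (GammaF 1 f) fun t ht => by
      nlinarith [mul_nonneg hΓ (sub_nonneg.2 ht.2)]) (f := f) (fun x hx => ?_) ht
    · rwa [show -GammaF 1 f * t + GammaF 1 f = GammaF 1 f * (1 - t) by ring] at this
    · refine Real.le_sqrt_of_sq_le ?_
      have := hf.sq_sub_le (a := x) (b := 1) hx (by simp) hx.2
      rw [h1] at this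
      nlinarith

lemma concMaj_continuousOn (hf : MemA 1 f) (h1 : f 1 = 0)
    (hn : ∀ u ∈ Icc (0 : ℝ) 1, 0 ≤ f u) {M : ℝ} (hM : ∀ t ∈ Icc (0 : ℝ) 1, f t ≤ M)
    (hF0 : concMaj 1 f 0 = 0) (hF1 : concMaj 1 f 1 = 0) :
    ContinuousOn (concMaj 1 f) (Icc 0 1) := by
  have hpos : ∀ u ∈ Icc (0 : ℝ) 1, 0 ≤ concMaj 1 f u := fun u hu =>
    (hn u hu).trans (le_concMaj hM hu)
  intro x hx
  rcases eq_or_lt_of_le hx.1 with rfl | hx0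
  · have hlim : Tendsto (fun t => √(GammaF 1 f * t)) (nhdsWithin 0 (Icc (0 : ℝ) 1)) (nhds 0) := by
      have : Continuous fun t : ℝ => √(GammaF 1 f * t) := by fun_prop
      simpa using (this.tendsto 0).mono_left nhdsWithin_le_nhds
    rw [ContinuousWithinAt, hF0]
    refine tendsto_of_tendsto_of_tendsto_of_le_of_le' tendsto_const_nhds hlim ?_ ?_
    · filter_upwards [self_mem_nhdsWithin] with t ht using hpos t ht
    · filter_upwards [self_mem_nhdsWithin] with t ht using (concMaj_le_sqrt hf h1 ht).1
  rcases eq_or_lt_of_le hx.2 with rfl | hx1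
  · have hlim : Tendsto (fun t => √(GammaF 1 f * (1 - t))) (nhdsWithin 1 (Icc (0 : ℝ) 1))
        (nhds 0) := by
      have : Continuous fun t : ℝ => √(GammaF 1 f * (1 - t)) := by fun_prop
      simpa using (this.tendsto 1).mono_left nhdsWithin_le_nhds
    rw [ContinuousWithinAt, hF1]
    refine tendsto_of_tendsto_of_tendsto_of_le_of_le' tendsto_const_nhds hlim ?_ ?_
    · filter_upwards [self_mem_nhdsWithin] with t ht using hpos t ht
    · filter_upwards [self_mem_nhdsWithin] with t ht using (concMaj_le_sqrt hf h1 ht).2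
  · have h := (concaveOn_concMaj hM).continuousOn_interior
    rw [interior_Icc] at h
    exact ((h x ⟨hx0, hx1⟩).continuousAt (Ioo_mem_nhds hx0 hx1)).continuousWithinAt

/-- The set of interior points at which `f` lies strictly below its least concave majorant. It is
open when both functions are continuous; the other points of `[0, 1]` are contact points, provided
`f` meets its majorant at `0` and `1`. -/
def gapSet (f : ℝ → ℝ) : Set ℝ := {x | x ∈ Ioo (0 : ℝ) 1 ∧ f x < concMaj 1 f x}

lemma isOpen_gapSet (hc : ContinuousOn f (Icc 0 1))
    (hFc : ContinuousOn (concMaj 1 f) (Icc 0 1)) : IsOpen (gapSet f) := by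
  have h := ((hFc.sub hc).mono Ioo_subset_Icc_self).isOpen_inter_preimage isOpen_Ioo
    (isOpen_Ioi (a := (0 : ℝ)))
  convert h using 1
  ext x
  simp [gapSet]

/-- On a component of the gap set the majorant is the chord between the endpoints. -/
lemma gap_component (hf : MemA 1 f) {M : ℝ} (hM : ∀ t ∈ Icc (0 : ℝ) 1, f t ≤ M)
    (h0 : f 0 = concMaj 1 f 0) (h1 : f 1 = concMaj 1 f 1)
    (hFc : ContinuousOn (concMaj 1 f) (Icc 0 1)) {x : ℝ} (hx : x ∈ gapSet f) :
    ∃ a b : ℝ, a < b ∧ a ∈ Icc (0 : ℝ) 1 ∧ b ∈ Icc (0 : ℝ) 1 ∧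
      connectedComponentIn (gapSet f) x = Ioo a b ∧
      ∀ t ∈ Ioo a b, HasDerivAt (concMaj 1 f) ((f b - f a) / (b - a)) t := by
  have hU := isOpen_gapSet hf.continuousOn hFc
  obtain ⟨a, b, hab, ha, hb, haU, hbU, hC⟩ := component_eq_Ioo hU (fun _ h => h.1) hx
  have hcontact : ∀ c ∈ Icc (0 : ℝ) 1, c ∉ gapSet f → f c = concMaj 1 f c := by
    intro c hc hcU
    rcases eq_or_lt_of_le hc.1 with rfl | hc0
    · exact h0
    rcases eq_or_lt_of_le hc.2 with rfl | hc1
    · exact h1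
    by_contra hne
    exact hcU ⟨⟨hc0, hc1⟩, lt_of_le_of_ne (le_concMaj hM hc) hne⟩
  refine ⟨a, b, hab, ha, hb, hC, fun t ht => ?_⟩
  have hlt : ∀ y ∈ Ioo a b, f y < concMaj 1 f y := fun y hy =>
    (connectedComponentIn_subset (gapSet f) x (hC ▸ hy)).2
  have hlin : HasDerivAt (fun y => f a + (f b - f a) / (b - a) * (y - a))
      ((f b - f a) / (b - a)) t := by
    simpa using (((hasDerivAt_id t).sub_const a).const_mul ((f b - f a) / (b - a))).const_add (f a)
  refine hlin.congr_of_eventuallyEq ?_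
  filter_upwards [Ioo_mem_nhds ht.1 ht.2] with y hy
  exact concMaj_eq_chord hM hf.continuousOn ha hb hab (hcontact a ha haU) (hcontact b hb hbU) hlt
    (Ioo_subset_Icc_self hy)

/-- The energy inequality. Off the gap set both derivatives agree almost everywhere; on each
component of the gap set the majorant is a chord, which has the least energy. -/
lemma lintegral_deriv_concMaj_le (hf : MemA 1 f) {M : ℝ} (hM : ∀ t ∈ Icc (0 : ℝ) 1, f t ≤ M)
    (h0 : f 0 = concMaj 1 f 0) (h1 : f 1 = concMaj 1 f 1)
    (hFc : ContinuousOn (concMaj 1 f) (Icc 0 1)) :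
    ∫⁻ t in Icc (0 : ℝ) 1, ENNReal.ofReal ((deriv (concMaj 1 f) t) ^ 2) ≤
      ∫⁻ t in Icc (0 : ℝ) 1, ENNReal.ofReal ((deriv f t) ^ 2) := by
  have hU := isOpen_gapSet hf.continuousOn hFc
  have hgap : Ioo (0 : ℝ) 1 ∩ gapSet f = gapSet f := inter_eq_right.2 fun _ h => h.1
  rw [setLIntegral_congr Ioo_ae_eq_Icc.symm, setLIntegral_congr Ioo_ae_eq_Icc.symm,
    ← lintegral_inter_add_sdiff _ (Ioo (0 : ℝ) 1) hU.measurableSet,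
    ← lintegral_inter_add_sdiff (fun t => ENNReal.ofReal ((deriv f t) ^ 2)) (Ioo (0 : ℝ) 1)
      hU.measurableSet, hgap]
  refine add_le_add (lintegral_le_of_components hU fun x hx => ?_) (le_of_eq ?_)
  · obtain ⟨a, b, hab, ha, hb, hC, hder⟩ := gap_component hf hM h0 h1 hFc hx
    rw [hC, setLIntegral_congr_fun (g := fun _ => ENNReal.ofReal (((f b - f a) / (b - a)) ^ 2))
      measurableSet_Ioo (fun t ht => by simp only [(hder t ht).deriv]),
      setLIntegral_const, Real.volume_Ioo, ← ENNReal.ofReal_mul (sq_nonneg _),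
      setLIntegral_congr Ioo_ae_eq_Ioc, ← ofReal_integral_eq_lintegral_ofReal
        ((intervalIntegrable_iff_integrableOn_Ioc_of_le hab.le).1
          (intervalIntegrable_of_Icc hf.2.2.2 ha hb)) (ae_of_all _ fun _ => sq_nonneg _),
      ← intervalIntegral.integral_of_le hab.le]
    exact ENNReal.ofReal_le_ofReal (hf.chord_energy_le ha hb hab)
  · refine setLIntegral_congr_fun_ae (measurableSet_Ioo.diff hU.measurableSet) ?_
    filter_upwards [hf.ae_hasDerivAt] with x hx hxd
    have hxI := Ioo_subset_Icc_self hxd.1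
    have hxe : f x = concMaj 1 f x := by
      by_contra hne
      exact hxd.2 ⟨hxd.1, lt_of_le_of_ne (le_concMaj hM hxI) hne⟩
    rw [(hasDerivAt_of_contact (concaveOn_concMaj hM) (fun t ht => le_concMaj hM ht) hxd.1 hxe
      (hx hxd.1)).deriv]

lemma concMaj_ae_differentiableAt (hf : MemA 1 f) {M : ℝ}
    (hM : ∀ t ∈ Icc (0 : ℝ) 1, f t ≤ M)
    (h0 : f 0 = concMaj 1 f 0) (h1 : f 1 = concMaj 1 f 1)
    (hFc : ContinuousOn (concMaj 1 f) (Icc 0 1)) :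
    ∀ᵐ x, x ∈ Ioo (0 : ℝ) 1 → DifferentiableAt ℝ (concMaj 1 f) x := by
  filter_upwards [hf.ae_hasDerivAt] with x hx hx'
  by_cases hxU : x ∈ gapSet f
  · obtain ⟨a, b, hab, ha, hb, hC, hder⟩ := gap_component hf hM h0 h1 hFc hxU
    exact (hder x (hC ▸ mem_connectedComponentIn hxU)).differentiableAt
  · have hxe : f x = concMaj 1 f x := by
      by_contra hne
      exact hxU ⟨hx', lt_of_le_of_ne (le_concMaj hM (Ioo_subset_Icc_self hx')) hne⟩
    exact (hasDerivAt_of_contact (concaveOn_concMaj hM) (fun t ht => le_concMaj hM ht) hx' hxe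
      (hx hx')).differentiableAt

/-- Fundamental theorem of calculus up to the endpoints, where `F'` may be unbounded. A concave
function has a right derivative at every interior point, so the version for right derivatives
applies, and the right derivative equals the derivative almost everywhere. -/
lemma concave_eq_integral_deriv {F : ℝ → ℝ} (hF : ConcaveOn ℝ (Icc 0 1) F)
    (hFc : ContinuousOn F (Icc 0 1)) (hF0 : F 0 = 0)
    (hd : ∀ᵐ x, x ∈ Ioo (0 : ℝ) 1 → DifferentiableAt ℝ F x)
    (hi : IntegrableOn (deriv F) (Icc 0 1)) {t : ℝ} (ht : t ∈ Icc (0 : ℝ) 1) :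
    F t = ∫ s in (0 : ℝ)..t, deriv F s := by
  have hsub : Icc 0 t ⊆ Icc (0 : ℝ) 1 := Icc_subset_Icc le_rfl ht.2
  have hae : ∀ᵐ x, x ∈ Ioo (0 : ℝ) 1 → deriv F x = derivWithin F (Ioi x) x := by
    filter_upwards [hd] with x hx hx'
    exact ((hx hx').derivWithin (uniqueDiffWithinAt_Ioi x)).symm
  have hne : ∀ᵐ x : ℝ, x ≠ 1 := by simp [ae_iff, measure_singleton]
  have hae' : ∀ᵐ x, x ∈ Ioc (0 : ℝ) t → deriv F x = derivWithin F (Ioi x) x := by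
    filter_upwards [hae, hne] with x hx hx1 hxt
    exact hx ⟨hxt.1, lt_of_le_of_ne (hxt.2.trans ht.2) hx1⟩
  have hint : IntervalIntegrable (deriv F) volume 0 t :=
    intervalIntegrable_of_Icc hi (by simp) ht
  have hint' : IntervalIntegrable (fun x => derivWithin F (Ioi x) x) volume 0 t := by
    refine hint.congr_ae ?_
    rw [uIoc_of_le ht.1]
    exact (ae_restrict_iff' measurableSet_Ioc).2 hae'
  have h := intervalIntegral.integral_eq_sub_of_hasDeriv_right_of_le ht.1 (hFc.mono hsub)
    (fun x hx => ?_) hint'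
  · rw [hF0, sub_zero] at h
    rw [← h]
    refine (intervalIntegral.integral_congr_ae ?_).symm
    rwa [uIoc_of_le ht.1]
  · have hxi : x ∈ interior (Icc (0 : ℝ) 1) := by
      rw [interior_Icc]
      exact ⟨hx.1, hx.2.trans_le ht.2⟩
    have := (hF.neg.differentiableWithinAt_Ioi_of_mem_interior hxi).neg
    rw [neg_neg] at this
    exact this.hasDerivWithinAt

end Bridge

/-- Lemma 5.9 of the paper. For a nonnegative bridge `f ∈ 𝓑₊`, the least
concave majorant `f̄` is again a nonnegative bridge, with `A_{0,1}(f̄) = A_{0,1}(f)` and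
`Γ_{0,1}(f̄) ≤ Γ_{0,1}(f)`. -/
theorem concave_majorant_of_bridge (f : ℝ → ℝ) (hf : MemA 1 f) (hbridge : f 1 = 0)
    (hnonneg : ∀ u ∈ Set.Icc (0:ℝ) 1, 0 ≤ f u) :
    MemA 1 (concMaj 1 f) ∧ concMaj 1 f 1 = 0 ∧
    (∀ u ∈ Set.Icc (0:ℝ) 1, 0 ≤ concMaj 1 f u) ∧
    AreaF 1 (concMaj 1 f) = AreaF 1 f ∧
    GammaF 1 (concMaj 1 f) ≤ GammaF 1 f := by
  obtain ⟨M, hM⟩ : ∃ M, ∀ t ∈ Icc (0 : ℝ) 1, f t ≤ M := by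
    obtain ⟨M, hM⟩ := isCompact_Icc.bddAbove_image hf.continuousOn
    exact ⟨M, fun t ht => hM ⟨t, ht, rfl⟩⟩
  have m0 : (0 : ℝ) ∈ Icc (0 : ℝ) 1 := by simp
  have m1 : (1 : ℝ) ∈ Icc (0 : ℝ) 1 := by simp
  have hF := concaveOn_concMaj hM
  have hpos : ∀ u ∈ Icc (0 : ℝ) 1, 0 ≤ concMaj 1 f u := fun u hu =>
    (hnonneg u hu).trans (le_concMaj hM hu)
  have hF0 : concMaj 1 f 0 = 0 :=
    le_antisymm (by simpa using (concMaj_le_sqrt hf hbridge m0).1) (hpos 0 m0)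
  have hF1 : concMaj 1 f 1 = 0 :=
    le_antisymm (by simpa using (concMaj_le_sqrt hf hbridge m1).2) (hpos 1 m1)
  have hFc := concMaj_continuousOn hf hbridge hnonneg hM hF0 hF1
  have c0 : f 0 = concMaj 1 f 0 := by rw [hf.1, hF0]
  have c1 : f 1 = concMaj 1 f 1 := by rw [hbridge, hF1]
  have hle := lintegral_deriv_concMaj_le hf hM c0 c1 hFc
  rw [← ofReal_integral_eq_lintegral_ofReal hf.2.2.2 (ae_of_all _ fun _ => sq_nonneg _)] at hle
  have hmeas : AEStronglyMeasurable (deriv (concMaj 1 f)) (volume.restrict (Icc (0 : ℝ) 1)) :=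
    (measurable_deriv _).aestronglyMeasurable
  have hsq : IntegrableOn (fun u => (deriv (concMaj 1 f) u) ^ 2) (Icc 0 1) :=
    ⟨hmeas.pow 2, (hasFiniteIntegral_iff_ofReal (ae_of_all _ fun _ => sq_nonneg _)).2
      (hle.trans_lt ENNReal.ofReal_lt_top)⟩
  have hint : IntegrableOn (deriv (concMaj 1 f)) (Icc 0 1) :=
    ((memLp_two_iff_integrable_sq hmeas).2 hsq).integrable one_le_two
  have hFM : ∀ t ∈ Icc (0 : ℝ) 1, concMaj 1 f t ≤ M := fun t ht =>
    concMaj_le (concaveOn_const M (convex_Icc 0 1)) hM ht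
  refine ⟨⟨hF0, hint, fun t ht => concave_eq_integral_deriv hF hFc hF0
    (concMaj_ae_differentiableAt hf hM c0 c1 hFc) hint ht, hsq⟩, hF1, hpos, ?_, ?_⟩
  · refine setIntegral_congr_fun measurableSet_Icc fun u hu => ?_
    rw [concMaj_eq_self hF hFM hu, convMin_eq_zero hF0 hF1 hpos hu,
      convMin_eq_zero hf.1 hbridge hnonneg hu]
  · rw [← ofReal_integral_eq_lintegral_ofReal hsq (ae_of_all _ fun _ => sq_nonneg _)] at hle
    exact (ENNReal.ofReal_le_ofReal_iff (integral_nonneg fun _ => sq_nonneg _)).1 hle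

end DidoLIL
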